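/- Let θ ∈ (0, 1/2] be such that θ⁻¹ ≥ 2 is an integer, and let n ≥ 2 be an integer. Then every surjective isometry U : S_{T[θ,S_n]} → S_{T[θ,S_n]} of the unit sphere of T[θ, S_n] extends to a surjective linear isometry Ũ : T[θ, S_n] → T[θ, S_n], i.e., there is a surjective linear isometry Ũ with Ũ(x) = U(x) for all x ∈ S_{T[θ,S_n]}. -/

import Mathlib

open scoped BigOperators

noncomputable section

/-- Projection of a finitely supported vector onto the coordinates in `E`. -/
def tsProj (E : Finset ℕ+) (x : ℕ+ →₀ ℝ) : ℕ+ →₀ ℝ :=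
  x.filter fun i => i ∈ E

/-- The Schreier families `S_n` on the positive integers:
`S₁` consists of the sets `F` with `|F| ≤ min F` (together with `∅`), and `S_{n+1}`
consists of unions `F₁ ∪ ⋯ ∪ F_d` of nonempty members `F₁ < ⋯ < F_d` of `S_n`
with `d ≤ min F₁` (together with `∅`). -/
def Schreier : ℕ → Set (Finset ℕ+)
  | 0 => {F | F.card ≤ 1}
  | 1 => {F | ∀ a ∈ F, F.card ≤ (a : ℕ)}
  | n + 2 =>
      {F | F = ∅ ∨
        ∃ (d : ℕ) (G : Fin d → Finset ℕ+),
          0 < d ∧ (∀ i, G i ∈ Schreier (n + 1)) ∧ (∀ i, (G i).Nonempty) ∧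
          (∀ i j : Fin d, i < j → ∀ a ∈ G i, ∀ b ∈ G j, a < b) ∧
          (∀ i, ∀ a ∈ G i, d ≤ (a : ℕ)) ∧ F = Finset.univ.biUnion G}

/-- A tuple of nonempty finite sets `E 0 < E 1 < ⋯` whose set of minima belongs to `S`. -/
def TsAdmissible (S : Set (Finset ℕ+)) {d : ℕ} (E : Fin d → Finset ℕ+) : Prop :=
  (∀ i, (E i).Nonempty) ∧
  (∀ i j : Fin d, i < j → ∀ a ∈ E i, ∀ b ∈ E j, a < b) ∧
  ∃ μ : Fin d → ℕ+, (∀ i, IsLeast (↑(E i) : Set ℕ+) (μ i)) ∧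
    Finset.univ.image μ ∈ S

/-- The iterated norms `‖·‖_m` in the construction of the Tsirelson norm:
`‖x‖₀` is the supremum norm and
`‖x‖_{m+1} = max(‖x‖_m, sup{θ ∑ᵢ ‖Eᵢ x‖_m : E₁ < ⋯ < E_d, {min Eᵢ} ∈ S})`. -/
def tnormAux (θ : ℝ) (S : Set (Finset ℕ+)) : ℕ → (ℕ+ →₀ ℝ) → ℝ
  | 0, x => ⨆ i, |x i|
  | m + 1, x =>
      max (tnormAux θ S m x)
        (sSup {r : ℝ | ∃ (d : ℕ) (E : Fin d → Finset ℕ+), TsAdmissible S E ∧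
          r = θ * ∑ i, tnormAux θ S m (tsProj (E i) x)})

/-- The Tsirelson norm `‖x‖_{θ,S} = sup_m ‖x‖_m` on `c₀₀`. -/
def tnorm (θ : ℝ) (S : Set (Finset ℕ+)) (x : ℕ+ →₀ ℝ) : ℝ :=
  ⨆ m : ℕ, tnormAux θ S m x

/-- `X`, together with the sequence `e` of unit vectors, is (a realization of) the
Tsirelson space `T[θ, S_n]`: a Banach space containing `c₀₀` isometrically
(w.r.t. the Tsirelson norm) as a dense subspace, in which `(e i)` is a
(1-unconditional) basis, i.e. every `x` has a unique expansion `x = ∑ᵢ aᵢ eᵢ`. -/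
structure IsTsirelsonSpace (θ : ℝ) (n : ℕ) (X : Type*) [NormedAddCommGroup X]
    [NormedSpace ℝ X] (e : ℕ+ → X) : Prop where
  complete : CompleteSpace X
  norm_embed : ∀ a : ℕ+ →₀ ℝ, ‖a.sum fun i c => c • e i‖ = tnorm θ (Schreier n) a
  dense_embed : DenseRange fun a : ℕ+ →₀ ℝ => a.sum fun i c => c • e i
  expansion : ∀ x : X, ∃! a : ℕ+ → ℝ, HasSum (fun i => a i • e i) x

/-!
Let `e_i` be the unit vectors and `x(i)` the coordinates of `x`. Adding `a • e_i` to `x` gives a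
vector of norm at most `max |a + x(i)| (θ |a| + ‖x‖)`, so for a sign `δ` and a unit vector `x` the
distance from `x` to `δ e_i` is at most `1 + θ` unless it equals `|x(i) - δ|`. In particular it is
`2` exactly if `x(i) = -δ`, which makes the face `{x | x(i) = δ}` of the unit sphere a metric
notion.

Every surjective isometry `U` of unit spheres maps `e_i` to a vector with a coordinate of modulus
one. Otherwise neither `p = U (e_i)` nor `q = U (-e_i)` has one, and then some unit vector is at
distance more than `1 + θ` from both: a flat vector supported far out on `⌈θ⁻¹⌉` coordinates. Its
image under `U⁻¹` would be too far from both `e_i` and `-e_i`. That the flat vector is so far away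
rests on the structure of `S_n`: an admissible family of sets almost realizing the norm of `p` can
be thinned out so as to make room for `⌈θ⁻¹⌉` further singletons, while keeping more than `θ` of the
norm. If `θ < 1/2` it suffices to drop the first set. If `θ = 1/2` there are several ways to make
room for two singletons, and they cannot all keep at most half of the norm.

Hence `U` permutes the faces, and as `|x(i) - δ|` is the distance from `x` to the face
`{x | x(i) = δ}` whenever it is at least `1`, it permutes the coordinates up to signs.
-/

/-! ### Schreier families -/

section Schreier

/-- The relation `E < F` between finite sets, which holds vacuously if one of them is empty. -/
def Precedes (E F : Finset ℕ+) : Prop :=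
  ∀ a ∈ E, ∀ b ∈ F, a < b

lemma Precedes.mono {E E' F F' : Finset ℕ+} (h : Precedes E F) (hE : E' ⊆ E) (hF : F' ⊆ F) :
    Precedes E' F' :=
  fun a ha b hb => h a (hE ha) b (hF hb)

lemma Precedes.disjoint {E F : Finset ℕ+} (h : Precedes E F) : Disjoint E F :=
  Finset.disjoint_left.mpr fun a ha ha' => (h a ha a ha').false

lemma Precedes.lt_coe {E F : Finset ℕ+} (h : Precedes E F) {a b : ℕ+} (ha : a ∈ E) (hb : b ∈ F) :
    (a : ℕ) < b :=
  h a ha b hb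

/-- The unions `B₁ ∪ ⋯ ∪ B_d` of `d` successive members of `𝒮`. Unlike in the definition of the
Schreier families, empty blocks are allowed. -/
def blockUnions (𝒮 : Set (Finset ℕ+)) : ℕ → Set (Finset ℕ+)
  | 0 => {∅}
  | d + 1 => {H | ∃ F ∈ blockUnions 𝒮 d, ∃ B ∈ 𝒮, Precedes F B ∧ H = F ∪ B}

variable {𝒮 : Set (Finset ℕ+)}

lemma union_mem_blockUnions {d : ℕ} {F B : Finset ℕ+} (hF : F ∈ blockUnions 𝒮 d) (hB : B ∈ 𝒮)
    (hFB : Precedes F B) : F ∪ B ∈ blockUnions 𝒮 (d + 1) :=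
  ⟨F, hF, B, hB, hFB, rfl⟩

lemma mem_blockUnions_one {B : Finset ℕ+} : B ∈ blockUnions 𝒮 1 ↔ B ∈ 𝒮 := by
  simp [blockUnions, Precedes]

lemma isLowerSet_blockUnions (h𝒮 : IsLowerSet 𝒮) (d : ℕ) : IsLowerSet (blockUnions 𝒮 d) := by
  induction d with
  | zero =>
    rintro H _ hH rfl
    exact Finset.subset_empty.mp hH
  | succ d ih =>
    rintro _ H hH ⟨F, hF, B, hB, hFB, rfl⟩
    refine ⟨F ∩ H, ih Finset.inter_subset_left hF, B ∩ H, h𝒮 Finset.inter_subset_left hB,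
      hFB.mono Finset.inter_subset_left Finset.inter_subset_left, ?_⟩
    rw [← Finset.union_inter_distrib_right, Finset.inter_eq_right.mpr hH]

lemma biUnion_univ_fin_succ {d : ℕ} (G : Fin (d + 1) → Finset ℕ+) :
    Finset.univ.biUnion G =
      (Finset.univ.biUnion fun i : Fin d => G i.castSucc) ∪ G (Fin.last d) := by
  ext a
  simp [Fin.exists_fin_succ']

lemma biUnion_mem_blockUnions {d : ℕ} {G : Fin d → Finset ℕ+} (hG : ∀ i, G i ∈ 𝒮)
    (hlt : ∀ i j, i < j → Precedes (G i) (G j)) : Finset.univ.biUnion G ∈ blockUnions 𝒮 d := by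
  induction d with
  | zero => simp [blockUnions]
  | succ d ih =>
    rw [biUnion_univ_fin_succ]
    refine union_mem_blockUnions (ih (fun i => hG _) fun i j hij => hlt _ _ (by simpa using hij))
      (hG _) fun a ha b hb => ?_
    obtain ⟨i, -, hi⟩ := Finset.mem_biUnion.mp ha
    exact hlt _ _ (Fin.castSucc_lt_last i) a hi b hb

lemma exists_nonempty_blocks_of_mem_blockUnions {d : ℕ} {H : Finset ℕ+}
    (hH : H ∈ blockUnions 𝒮 d) :
    ∃ r ≤ d, ∃ G : Fin r → Finset ℕ+, (∀ i, G i ∈ 𝒮) ∧ (∀ i, (G i).Nonempty) ∧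
      (∀ i j, i < j → Precedes (G i) (G j)) ∧ H = Finset.univ.biUnion G := by
  induction d generalizing H with
  | zero =>
    obtain rfl : H = ∅ := hH
    exact ⟨0, le_rfl, Fin.elim0, fun i => i.elim0, fun i => i.elim0, fun i => i.elim0, by simp⟩
  | succ d ih =>
    obtain ⟨F, hF, B, hB, hFB, rfl⟩ := hH
    obtain ⟨r, hrd, G, hG, hne, hlt, rfl⟩ := ih hF
    rcases B.eq_empty_or_nonempty with rfl | hBne
    · exact ⟨r, by omega, G, hG, hne, hlt, by simp⟩
    · refine ⟨r + 1, by omega, Fin.snoc (α := fun _ => Finset ℕ+) G B, ?_, ?_, ?_, ?_⟩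
      · simpa [Fin.forall_fin_succ'] using ⟨hG, hB⟩
      · simpa [Fin.forall_fin_succ'] using ⟨hne, hBne⟩
      · have hGB : ∀ i, Precedes (G i) B := fun i =>
          hFB.mono (Finset.subset_biUnion_of_mem G (Finset.mem_univ i)) subset_rfl
        simpa [Fin.forall_fin_succ', Fin.castSucc_lt_last, (Fin.le_last _).not_gt] using
          fun i => ⟨hlt i, hGB i⟩
      · simp [biUnion_univ_fin_succ]

lemma mem_schreier_add_two {n : ℕ} {F : Finset ℕ+} :
    F ∈ Schreier (n + 2) ↔ ∃ d, F ∈ blockUnions (Schreier (n + 1)) d ∧ ∀ a ∈ F, d ≤ (a : ℕ) := by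
  constructor
  · rintro (rfl | ⟨d, G, -, hG, -, hlt, hd, rfl⟩)
    · exact ⟨0, rfl, by simp⟩
    · exact ⟨d, biUnion_mem_blockUnions hG hlt, by simpa using fun a i ha => hd i a ha⟩
  · rintro ⟨d, hF, hd⟩
    obtain ⟨r, hrd, G, hG, hne, hlt, rfl⟩ := exists_nonempty_blocks_of_mem_blockUnions hF
    rcases r.eq_zero_or_pos with rfl | hr
    · exact Or.inl (by simp)
    · exact Or.inr ⟨r, G, hr, hG, hne, hlt, fun i a ha =>
        hrd.trans (hd a (Finset.mem_biUnion.mpr ⟨i, Finset.mem_univ i, ha⟩)), rfl⟩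

lemma isLowerSet_schreier : ∀ n, IsLowerSet (Schreier n)
  | 0 => fun _ _ hle hF => (Finset.card_le_card hle).trans hF
  | 1 => fun _ _ hle hF a ha => (Finset.card_le_card hle).trans (hF a (hle ha))
  | n + 2 => fun F F' hle hF => by
    obtain ⟨d, hFd, hd⟩ := mem_schreier_add_two.mp hF
    exact mem_schreier_add_two.mpr
      ⟨d, isLowerSet_blockUnions (isLowerSet_schreier (n + 1)) d hle hFd, fun a ha => hd a (hle ha)⟩

lemma schreier_one_subset : ∀ n, Schreier 1 ⊆ Schreier (n + 1)
  | 0 => subset_rfl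
  | n + 1 => fun _ hF => mem_schreier_add_two.mpr
    ⟨1, mem_blockUnions_one.mpr (schreier_one_subset n hF), fun a _ => a.pos⟩

lemma card_le_one_of_one_mem_schreier : ∀ {n : ℕ} {F : Finset ℕ+}, F ∈ Schreier n → 1 ∈ F →
    F.card ≤ 1
  | 0, _, hF, _ => hF
  | 1, _, hF, h1 => hF 1 h1
  | n + 2, F, hF, h1 => by
    obtain ⟨d, hFd, hd⟩ := mem_schreier_add_two.mp hF
    have hd1 : d ≤ 1 := hd 1 h1
    interval_cases d
    · obtain rfl : F = ∅ := hFd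
      simp
    · exact card_le_one_of_one_mem_schreier (mem_blockUnions_one.mp hFd) h1

lemma union_mem_schreier_add_two {n : ℕ} {F K : Finset ℕ+} (hF : F ∈ Schreier (n + 1))
    (hK : K ∈ Schreier (n + 1)) (hFK : Precedes F K) (h2 : ∀ a ∈ F ∪ K, 2 ≤ (a : ℕ)) :
    F ∪ K ∈ Schreier (n + 2) :=
  mem_schreier_add_two.mpr
    ⟨2, union_mem_blockUnions (mem_blockUnions_one.mpr hF) hK hFK, h2⟩

lemma lt_of_mem_erase_isLeast {J : Finset ℕ+} {j a : ℕ+} (hj : IsLeast (J : Set ℕ+) j)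
    (ha : a ∈ J.erase j) : j < a :=
  (hj.2 (Finset.mem_of_mem_erase ha)).lt_of_ne (Finset.ne_of_mem_erase ha).symm

-- The minimum bounds the number of blocks, so removing it makes room for one block more.
lemma erase_union_mem_schreier_add_two {n : ℕ} {J B : Finset ℕ+} {j : ℕ+}
    (hJ : J ∈ Schreier (n + 2)) (hj : IsLeast (J : Set ℕ+) j) (hB : B ∈ Schreier (n + 1))
    (hJB : Precedes J B) : J.erase j ∪ B ∈ Schreier (n + 2) := by
  obtain ⟨d, hJd, hd⟩ := mem_schreier_add_two.mp hJ
  have hsub : J.erase j ⊆ J := Finset.erase_subset j J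
  refine mem_schreier_add_two.mpr ⟨d + 1, union_mem_blockUnions
    (isLowerSet_blockUnions (isLowerSet_schreier _) d hsub hJd) hB (hJB.mono hsub subset_rfl),
    fun a ha => ?_⟩
  have hja : j < a := (Finset.mem_union.mp ha).elim (lt_of_mem_erase_isLeast hj) (hJB j hj.1 a)
  exact (hd j hj.1).trans_lt hja

lemma mem_schreier_one_of_precedes {J B : Finset ℕ+} (hJ : J.Nonempty) (hJB : Precedes J B)
    (hB : B.card ≤ 2) : B ∈ Schreier 1 := by
  obtain ⟨j, hj⟩ := hJ
  intro a ha
  have hja := hJB.lt_coe hj ha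
  have hj0 := j.pos
  omega

lemma erase_union_mem_schreier_of_card_le_two {n : ℕ} {J B : Finset ℕ+} {j : ℕ+}
    (hJ : J ∈ Schreier (n + 1)) (hj : IsLeast (J : Set ℕ+) j) (hB : B.card ≤ 2)
    (hJB : Precedes J B) : J.erase j ∪ B ∈ Schreier (n + 1) := by
  cases n with
  | succ n =>
    exact erase_union_mem_schreier_add_two hJ hj
      (schreier_one_subset n (mem_schreier_one_of_precedes ⟨j, hj.1⟩ hJB hB)) hJB
  | zero =>
    intro a ha
    have hja : (j : ℕ) < a :=
      (Finset.mem_union.mp ha).elim (lt_of_mem_erase_isLeast hj) (hJB j hj.1 a)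
    have hJj : J.card ≤ (j : ℕ) := hJ j hj.1
    have hcard := Finset.card_union_le (J.erase j) B
    have herase := Finset.card_erase_add_one hj.1
    omega

/-- The ways, used in `exists_room_or_splitting`, of making room for `B` in a set `J` with minimum
`j` that has a distinguished last block `L` with an element `b`. -/
structure IsRoomySplitting (𝒮 : Set (Finset ℕ+)) (J B L : Finset ℕ+) (j b : ℕ+) : Prop where
  subset : L ⊆ J
  mem : b ∈ L
  notMem : j ∉ L
  sdiff_union_mem : J \ L ∪ B ∈ 𝒮
  pair_union_mem : {j, b} ∪ B ∈ 𝒮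
  insert_erase_union_mem : insert j (L.erase b) ∪ B ∈ 𝒮

lemma isRoomySplitting_last_block {n d : ℕ} {F L B : Finset ℕ+} {j b : ℕ+}
    (hF : F ∈ blockUnions (Schreier (n + 1)) d) (hL : L ∈ Schreier (n + 1)) (hFL : Precedes F L)
    (hj : IsLeast (F : Set ℕ+) j) (hb : IsLeast (L : Set ℕ+) b) (hj2 : 2 ≤ (j : ℕ))
    (hdj : d < j) (hB : B.card ≤ 2) (hJB : Precedes (F ∪ L) B) :
    IsRoomySplitting (Schreier (n + 2)) (F ∪ L) B L j b := by
  have hjL : ∀ a ∈ L, (j : ℕ) < a := fun a ha => hFL.lt_coe hj.1 ha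
  have hjB : ∀ a ∈ B, (j : ℕ) < a := fun a ha => hJB.lt_coe (Finset.mem_union_left L hj.1) ha
  have hLB : Precedes L B := hJB.mono Finset.subset_union_right subset_rfl
  have insert_mem : ∀ K ∈ Schreier (n + 1), (∀ a ∈ K, (j : ℕ) < a) →
      {j} ∪ K ∈ Schreier (n + 2) := fun K hK hjK =>
    union_mem_schreier_add_two
      (schreier_one_subset n (by simp [Schreier, Nat.one_le_iff_ne_zero])) hK
      (by simpa [Precedes] using hjK)
      (by simpa using ⟨hj2, fun a ha => hj2.trans (hjK a ha).le⟩)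
  refine ⟨Finset.subset_union_right, hb.1, fun h => (hjL j h).false, ?_, ?_, ?_⟩
  · rw [Finset.union_sdiff_cancel_right hFL.disjoint]
    refine mem_schreier_add_two.mpr ⟨d + 1, union_mem_blockUnions hF (schreier_one_subset n
      (mem_schreier_one_of_precedes ⟨b, hb.1⟩ hLB hB))
      (hJB.mono Finset.subset_union_left subset_rfl), fun a ha => ?_⟩
    exact hdj.trans_le ((Finset.mem_union.mp ha).elim (fun h => hj.2 h) fun h => (hjB a h).le)
  · have hbB : ∀ a ∈ {b} ∪ B, (j : ℕ) < a := by simpa using ⟨hjL b hb.1, hjB⟩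
    have hcard : ({b} ∪ B).card ≤ 3 :=
      (Finset.card_union_le _ _).trans (by rw [Finset.card_singleton]; omega)
    rw [Finset.insert_eq, Finset.union_assoc]
    refine insert_mem _ (schreier_one_subset n fun a ha => ?_) hbB
    have := hbB a ha
    omega
  · rw [Finset.insert_eq, Finset.union_assoc]
    refine insert_mem _ (erase_union_mem_schreier_of_card_le_two hL hb hB hLB) fun a ha => ?_
    exact (Finset.mem_union.mp ha).elim (fun h => hjL a (Finset.mem_of_mem_erase h)) (hjB a)

lemma exists_room_or_splitting {n : ℕ} {J B : Finset ℕ+} {j : ℕ+} (hJ : J ∈ Schreier (n + 2))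
    (hj : IsLeast (J : Set ℕ+) j) (hj2 : 2 ≤ (j : ℕ)) (hB : B.card ≤ 2) (hJB : Precedes J B) :
    J ∪ B ∈ Schreier (n + 2) ∨ ∃ L b, IsRoomySplitting (Schreier (n + 2)) J B L j b := by
  have hBS : B ∈ Schreier (n + 1) :=
    schreier_one_subset n (mem_schreier_one_of_precedes ⟨j, hj.1⟩ hJB hB)
  have hj_le : ∀ a ∈ J ∪ B, j ≤ a := fun a ha =>
    (Finset.mem_union.mp ha).elim (fun h => hj.2 h) fun h => (hJB j hj.1 a h).le
  have room : ∀ d < (j : ℕ), J ∈ blockUnions (Schreier (n + 1)) d → J ∪ B ∈ Schreier (n + 2) :=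
    fun d hdj hJd => mem_schreier_add_two.mpr
      ⟨d + 1, union_mem_blockUnions hJd hBS hJB, fun a ha => hdj.trans_le (hj_le a ha)⟩
  obtain ⟨d, hJd, hd⟩ := mem_schreier_add_two.mp hJ
  cases d with
  | zero => exact Or.inl (room 0 j.pos hJd)
  | succ d =>
    have hdj : d < j := hd j hj.1
    obtain ⟨F, hF, L, hL, hFL, rfl⟩ := hJd
    rcases F.eq_empty_or_nonempty with rfl | ⟨f, hf⟩
    · exact Or.inl (room 1 hj2 (mem_blockUnions_one.mpr (by simpa using hL)))
    rcases L.eq_empty_or_nonempty with rfl | hLne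
    · exact Or.inl (room d hdj (by simpa using hF))
    have hjL : j ∉ L := fun h =>
      (hj.2 (Finset.mem_union_left L hf)).not_gt (hFL f hf j h)
    have hjF : IsLeast (F : Set ℕ+) j := ⟨(Finset.mem_union.mp hj.1).resolve_right hjL,
      fun a ha => hj.2 (Finset.mem_union_left L ha)⟩
    exact Or.inr ⟨L, L.min' hLne, isRoomySplitting_last_block hF hL hFL hjF
      (L.isLeast_min' hLne) hj2 hdj hB hJB⟩

end Schreier

/-! ### The Tsirelson norm -/

section Norm

variable {θ : ℝ} {S : Set (Finset ℕ+)} {J K : Finset ℕ+} {E : ℕ+ → Finset ℕ+}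

/-- A family of nonempty successive finite sets, each indexed by its least element. Indexing by
minima instead of by `Fin d` lets one pass to subfamilies and to unions of families. -/
structure IsSuccessive (J : Finset ℕ+) (E : ℕ+ → Finset ℕ+) : Prop where
  isLeast : ∀ j ∈ J, IsLeast (E j : Set ℕ+) j
  precedes : ∀ j ∈ J, ∀ j' ∈ J, j < j' → Precedes (E j) (E j')

lemma IsSuccessive.mono (hE : IsSuccessive J E) (hKJ : K ⊆ J) : IsSuccessive K E :=
  ⟨fun j hj => hE.isLeast j (hKJ hj), fun j hj j' hj' => hE.precedes j (hKJ hj) j' (hKJ hj')⟩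

lemma IsSuccessive.pairwiseDisjoint (hE : IsSuccessive J E) :
    (J : Set ℕ+).PairwiseDisjoint E := fun j hj j' hj' hne =>
  hne.lt_or_gt.elim (fun h => (hE.precedes j hj j' hj' h).disjoint)
    fun h => (hE.precedes j' hj' j hj h).disjoint.symm

lemma IsSuccessive.exists_tsAdmissible (hE : IsSuccessive J E) (hJ : J ∈ S) :
    ∃ F : Fin J.card → Finset ℕ+, TsAdmissible S F ∧
      ∀ g : Finset ℕ+ → ℝ, ∑ i, g (F i) = ∑ j ∈ J, g (E j) := by
  set f := J.orderEmbOfFin rfl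
  have hf : ∀ i, f i ∈ J := J.orderEmbOfFin_mem rfl
  have himage : Finset.univ.image f = J := J.image_orderEmbOfFin_univ rfl
  refine ⟨fun i => E (f i), ⟨fun i => ⟨f i, (hE.isLeast _ (hf i)).1⟩,
    fun i j hij => hE.precedes _ (hf i) _ (hf j) (f.strictMono hij), f,
    fun i => hE.isLeast _ (hf i), himage.symm ▸ hJ⟩, fun g => ?_⟩
  conv_rhs => rw [← himage]
  exact (Finset.sum_image (f := fun j => g (E j)) f.injective.injOn).symm

lemma TsAdmissible.exists_isSuccessive {d : ℕ} {F : Fin d → Finset ℕ+} (hF : TsAdmissible S F) :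
    ∃ J ∈ S, ∃ E, IsSuccessive J E ∧ ∀ g : Finset ℕ+ → ℝ, ∑ i, g (F i) = ∑ j ∈ J, g (E j) := by
  obtain ⟨-, hlt, μ, hμ, hS⟩ := hF
  have hmono : StrictMono μ := fun i j hij => hlt i j hij _ (hμ i).1 _ (hμ j).1
  have hext : ∀ i, Function.extend μ F (fun _ => ∅) (μ i) = F i :=
    hmono.injective.extend_apply F _
  refine ⟨_, hS, Function.extend μ F fun _ => ∅, ⟨?_, ?_⟩, fun g => ?_⟩
  · simpa [hext] using hμ
  · simpa [hext, hmono.lt_iff_lt, Precedes] using hlt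
  · simp [Finset.sum_image hmono.injective.injOn, hext]

lemma tsProj_apply (F : Finset ℕ+) (x : ℕ+ →₀ ℝ) (i : ℕ+) :
    tsProj F x i = if i ∈ F then x i else 0 :=
  Finsupp.filter_apply _ x i

lemma tsProj_add (F : Finset ℕ+) (x y : ℕ+ →₀ ℝ) : tsProj F (x + y) = tsProj F x + tsProj F y :=
  Finsupp.filter_add

lemma abs_tsProj_apply_le (F : Finset ℕ+) (x : ℕ+ →₀ ℝ) (i : ℕ+) : |tsProj F x i| ≤ |x i| := by
  rw [tsProj_apply]
  split_ifs <;> simp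

/-- The `ℓ₁` norm on `c₀₀`. -/
def l1Norm (x : ℕ+ →₀ ℝ) : ℝ :=
  x.sum fun _ c => |c|

lemma l1Norm_nonneg (x : ℕ+ →₀ ℝ) : 0 ≤ l1Norm x :=
  Finset.sum_nonneg fun _ _ => abs_nonneg _

lemma sum_abs_le_l1Norm (F : Finset ℕ+) (x : ℕ+ →₀ ℝ) : ∑ i ∈ F, |x i| ≤ l1Norm x := by
  rw [l1Norm, Finsupp.sum_of_support_subset x (Finset.subset_union_right (s₁ := F)) _ (by simp)]
  exact Finset.sum_le_sum_of_subset_of_nonneg Finset.subset_union_left fun _ _ _ => abs_nonneg _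

lemma abs_apply_le_l1Norm (x : ℕ+ →₀ ℝ) (i : ℕ+) : |x i| ≤ l1Norm x := by
  simpa using sum_abs_le_l1Norm {i} x

lemma l1Norm_tsProj (F : Finset ℕ+) (x : ℕ+ →₀ ℝ) : l1Norm (tsProj F x) = ∑ i ∈ F, |x i| := by
  have hsupp : (tsProj F x).support ⊆ F := by
    rw [tsProj, Finsupp.support_filter]
    exact fun i hi => (Finset.mem_filter.mp hi).2
  rw [l1Norm, Finsupp.sum_of_support_subset _ hsupp _ (by simp)]
  exact Finset.sum_congr rfl fun i hi => by rw [tsProj_apply, if_pos hi]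

lemma IsSuccessive.sum_l1Norm_tsProj_le (hE : IsSuccessive J E) (x : ℕ+ →₀ ℝ) :
    ∑ j ∈ J, l1Norm (tsProj (E j) x) ≤ l1Norm x := by
  simp_rw [l1Norm_tsProj]
  rw [← Finset.sum_biUnion hE.pairwiseDisjoint]
  exact sum_abs_le_l1Norm _ x

lemma tnormAux_nonneg (m : ℕ) (x : ℕ+ →₀ ℝ) : 0 ≤ tnormAux θ S m x := by
  induction m with
  | zero => exact Real.iSup_nonneg fun i => abs_nonneg _
  | succ m ih => exact le_max_of_le_left ih

lemma abs_apply_le_tnormAux (m : ℕ) (x : ℕ+ →₀ ℝ) (i : ℕ+) : |x i| ≤ tnormAux θ S m x := by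
  induction m with
  | zero => exact le_ciSup ⟨l1Norm x, Set.forall_mem_range.mpr (abs_apply_le_l1Norm x)⟩ i
  | succ m ih => exact le_max_of_le_left ih

lemma tnormAux_succ_le {m : ℕ} {x : ℕ+ →₀ ℝ} {C : ℝ} (hx : tnormAux θ S m x ≤ C)
    (h : ∀ J ∈ S, ∀ E, IsSuccessive J E → θ * ∑ j ∈ J, tnormAux θ S m (tsProj (E j) x) ≤ C) :
    tnormAux θ S (m + 1) x ≤ C := by
  refine max_le hx (Real.sSup_le ?_ ((tnormAux_nonneg m x).trans hx))
  rintro _ ⟨d, F, hF, rfl⟩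
  obtain ⟨J, hJ, E, hE, hsum⟩ := hF.exists_isSuccessive
  exact (congrArg (θ * ·) (hsum fun F => tnormAux θ S m (tsProj F x))).trans_le (h J hJ E hE)

lemma IsSuccessive.mul_sum_tnormAux_le_l1Norm (h0 : 0 ≤ θ) (h1 : θ ≤ 1) (hE : IsSuccessive J E)
    {m : ℕ} (hm : ∀ x, tnormAux θ S m x ≤ l1Norm x) (x : ℕ+ →₀ ℝ) :
    θ * ∑ j ∈ J, tnormAux θ S m (tsProj (E j) x) ≤ l1Norm x :=
  calc θ * ∑ j ∈ J, tnormAux θ S m (tsProj (E j) x)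
      ≤ θ * ∑ j ∈ J, l1Norm (tsProj (E j) x) := by gcongr; exact hm _
    _ ≤ θ * l1Norm x := by gcongr; exact hE.sum_l1Norm_tsProj_le x
    _ ≤ l1Norm x := mul_le_of_le_one_left (l1Norm_nonneg x) h1

lemma tnormAux_le_l1Norm (h0 : 0 ≤ θ) (h1 : θ ≤ 1) (m : ℕ) (x : ℕ+ →₀ ℝ) :
    tnormAux θ S m x ≤ l1Norm x := by
  induction m generalizing x with
  | zero => exact Real.iSup_le (abs_apply_le_l1Norm x) (l1Norm_nonneg x)
  | succ m ih =>
    exact tnormAux_succ_le (ih x) fun _ _ _ hE => hE.mul_sum_tnormAux_le_l1Norm h0 h1 ih x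

lemma IsSuccessive.mul_sum_le_tnormAux_succ (h0 : 0 ≤ θ) (h1 : θ ≤ 1) (hE : IsSuccessive J E)
    (hJ : J ∈ S) (m : ℕ) (x : ℕ+ →₀ ℝ) :
    θ * ∑ j ∈ J, tnormAux θ S m (tsProj (E j) x) ≤ tnormAux θ S (m + 1) x := by
  obtain ⟨F, hF, hsum⟩ := hE.exists_tsAdmissible hJ
  refine le_max_of_le_right (le_csSup ⟨l1Norm x, ?_⟩
    ⟨_, F, hF, congrArg (θ * ·) (hsum fun F => tnormAux θ S m (tsProj F x)).symm⟩)
  rintro _ ⟨d, F, hF, rfl⟩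
  obtain ⟨J, -, E, hE, hsum⟩ := hF.exists_isSuccessive
  exact (congrArg (θ * ·) (hsum fun F => tnormAux θ S m (tsProj F x))).trans_le
    (hE.mul_sum_tnormAux_le_l1Norm h0 h1 (tnormAux_le_l1Norm h0 h1 m) x)

lemma tnormAux_mono (h0 : 0 ≤ θ) (h1 : θ ≤ 1) (m : ℕ) {x y : ℕ+ →₀ ℝ} (hxy : ∀ i, |x i| ≤ |y i|) :
    tnormAux θ S m x ≤ tnormAux θ S m y := by
  induction m generalizing x y with
  | zero =>
    exact Real.iSup_le (fun i => (hxy i).trans (abs_apply_le_tnormAux 0 y i)) (tnormAux_nonneg 0 y)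
  | succ m ih =>
    refine tnormAux_succ_le ((ih hxy).trans (le_max_left _ _)) fun J hJ E hE =>
      le_trans ?_ (hE.mul_sum_le_tnormAux_succ h0 h1 hJ m y)
    gcongr
    refine ih fun i => ?_
    rw [tsProj_apply, tsProj_apply]
    split_ifs
    exacts [hxy i, le_rfl]

lemma tnormAux_add_le (h0 : 0 ≤ θ) (h1 : θ ≤ 1) (m : ℕ) {x y : ℕ+ →₀ ℝ} {C : ℝ}
    (hsup : ∀ i, |x i + y i| ≤ C) (hl1 : θ * l1Norm x + tnormAux θ S m y ≤ C) :
    tnormAux θ S m (x + y) ≤ C := by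
  induction m generalizing x y C with
  | zero => exact Real.iSup_le hsup ((abs_nonneg _).trans (hsup 1))
  | succ m ih =>
    have hy : tnormAux θ S m y ≤ tnormAux θ S (m + 1) y := le_max_left _ _
    have ih_crude : ∀ x y, tnormAux θ S m (x + y) ≤ l1Norm x + tnormAux θ S m y := fun x y =>
      ih (fun i => (abs_add_le _ _).trans
          (add_le_add (abs_apply_le_l1Norm x i) (abs_apply_le_tnormAux m y i)))
        (add_le_add_left (mul_le_of_le_one_left (l1Norm_nonneg x) h1) _)
    refine tnormAux_succ_le (ih hsup (by linarith)) fun J hJ E hE => ?_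
    calc θ * ∑ j ∈ J, tnormAux θ S m (tsProj (E j) (x + y))
        ≤ θ * ∑ j ∈ J, (l1Norm (tsProj (E j) x) + tnormAux θ S m (tsProj (E j) y)) := by
          gcongr
          rw [tsProj_add]
          exact ih_crude _ _
      _ = θ * ∑ j ∈ J, l1Norm (tsProj (E j) x) + θ * ∑ j ∈ J, tnormAux θ S m (tsProj (E j) y) := by
          rw [Finset.sum_add_distrib, mul_add]
      _ ≤ θ * l1Norm x + tnormAux θ S (m + 1) y := by
          gcongr
          exacts [hE.sum_l1Norm_tsProj_le x, hE.mul_sum_le_tnormAux_succ h0 h1 hJ m y]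
      _ ≤ C := hl1

lemma tnormAux_le_tnorm (h0 : 0 ≤ θ) (h1 : θ ≤ 1) (m : ℕ) (x : ℕ+ →₀ ℝ) :
    tnormAux θ S m x ≤ tnorm θ S x :=
  le_ciSup (f := fun m => tnormAux θ S m x)
    ⟨l1Norm x, Set.forall_mem_range.mpr fun m => tnormAux_le_l1Norm h0 h1 m x⟩ m

lemma abs_apply_le_tnorm (h0 : 0 ≤ θ) (h1 : θ ≤ 1) (x : ℕ+ →₀ ℝ) (i : ℕ+) :
    |x i| ≤ tnorm θ S x :=
  (abs_apply_le_tnormAux 0 x i).trans (tnormAux_le_tnorm h0 h1 0 x)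

lemma tnorm_mono (h0 : 0 ≤ θ) (h1 : θ ≤ 1) {x y : ℕ+ →₀ ℝ} (hxy : ∀ i, |x i| ≤ |y i|) :
    tnorm θ S x ≤ tnorm θ S y :=
  ciSup_le fun m => (tnormAux_mono h0 h1 m hxy).trans (tnormAux_le_tnorm h0 h1 m y)

lemma tnorm_add_le (h0 : 0 ≤ θ) (h1 : θ ≤ 1) {x y : ℕ+ →₀ ℝ} {C : ℝ}
    (hsup : ∀ i, |x i + y i| ≤ C) (hl1 : θ * l1Norm x + tnorm θ S y ≤ C) :
    tnorm θ S (x + y) ≤ C :=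
  ciSup_le fun m => tnormAux_add_le h0 h1 m hsup
    ((add_le_add_right (tnormAux_le_tnorm h0 h1 m y) _).trans hl1)

end Norm

/-! ### Flat vectors far from a given vector -/

section FlatVectors

variable {θ : ℝ} {S : Set (Finset ℕ+)} {J K B : Finset ℕ+} {E : ℕ+ → Finset ℕ+}

/-- The vector `a 1_B`, flat of height `a` on the set `B`. -/
def flatVec (a : ℝ) (B : Finset ℕ+) : ℕ+ →₀ ℝ :=
  Finsupp.indicator B fun _ _ => a

lemma flatVec_apply (a : ℝ) (B : Finset ℕ+) (i : ℕ+) : flatVec a B i = if i ∈ B then a else 0 := by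
  simp [flatVec, Finsupp.indicator_apply]

lemma l1Norm_flatVec (a : ℝ) (B : Finset ℕ+) : l1Norm (flatVec a B) = B.card * |a| := by
  have hsupp : (flatVec a B).support ⊆ B := Finsupp.support_indicator_subset B _
  rw [l1Norm, Finsupp.sum_of_support_subset _ hsupp _ (by simp), ← nsmul_eq_mul]
  exact Finset.sum_eq_card_nsmul fun i hi => by rw [flatVec_apply, if_pos hi]

lemma tnorm_flatVec_le (h0 : 0 ≤ θ) (h1 : θ ≤ 1) {a C : ℝ} (ha : |a| ≤ C)
    (hB : θ * (B.card * |a|) ≤ C) : tnorm θ S (flatVec a B) ≤ C := by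
  refine ciSup_le fun m => ?_
  have hzero : tnormAux θ S m 0 ≤ 0 :=
    (tnormAux_le_l1Norm h0 h1 m 0).trans_eq Finsupp.sum_zero_index
  rw [← add_zero (flatVec a B)]
  refine tnormAux_add_le h0 h1 m (fun i => ?_) ?_
  · rw [flatVec_apply]
    split_ifs
    · simpa using ha
    · simpa using (abs_nonneg a).trans ha
  · rw [l1Norm_flatVec]
    linarith

lemma IsSuccessive.notMem_of_precedes (hE : IsSuccessive J E) (hB : ∀ j ∈ J, Precedes (E j) B)
    {j : ℕ+} (hj : j ∈ J) : j ∉ B :=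
  fun hjB => (hB j hj j (hE.isLeast j hj).1 j hjB).false

lemma IsSuccessive.union_singletons (hE : IsSuccessive J E) (hB : ∀ j ∈ J, Precedes (E j) B) :
    IsSuccessive (J ∪ B) fun j => if j ∈ B then {j} else E j := by
  have hJB : ∀ {j}, j ∈ J → j ∉ B := hE.notMem_of_precedes hB
  constructor
  · intro j hj
    by_cases hjB : j ∈ B
    · simp [hjB]
    · simpa only [if_neg hjB] using hE.isLeast j ((Finset.mem_union.mp hj).resolve_right hjB)
  · intro j hj j' hj' hlt
    rcases Finset.mem_union.mp hj with hj | hj <;> rcases Finset.mem_union.mp hj' with hj' | hj'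
    · simpa only [if_neg (hJB hj), if_neg (hJB hj')] using hE.precedes j hj j' hj' hlt
    · simpa only [if_neg (hJB hj), if_pos hj'] using
        (hB j hj).mono subset_rfl (Finset.singleton_subset_iff.mpr hj')
    · exact absurd (hB j' hj' j' (hE.isLeast j' hj').1 j hj) hlt.not_gt
    · simpa [Precedes, hj, hj'] using hlt

lemma IsSuccessive.le_tnorm_flatVec_sub (h0 : 0 ≤ θ) (h1 : θ ≤ 1) (hE : IsSuccessive J E)
    (hB : ∀ j ∈ J, Precedes (E j) B) (hJB : J ∪ B ∈ S) {p : ℕ+ →₀ ℝ} (hp : ∀ b ∈ B, p b = 0)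
    (m : ℕ) (a : ℝ) :
    θ * ∑ j ∈ J, tnormAux θ S m (tsProj (E j) p) + θ * (B.card * a) ≤
      tnorm θ S (flatVec a B - p) := by
  set E' : ℕ+ → Finset ℕ+ := fun j => if j ∈ B then {j} else E j with hE'
  set x := flatVec a B - p with hx
  have hJnB : ∀ {j}, j ∈ J → j ∉ B := hE.notMem_of_precedes hB
  have on_J : ∑ j ∈ J, tnormAux θ S m (tsProj (E j) p) ≤
      ∑ j ∈ J, tnormAux θ S m (tsProj (E' j) x) := by
    refine Finset.sum_le_sum fun j hj => tnormAux_mono h0 h1 m fun i => ?_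
    simp only [hE', if_neg (hJnB hj), tsProj_apply]
    split_ifs with hi
    · have hiB : i ∉ B := fun hiB => (hB j hj i hi i hiB).false
      simp [hx, flatVec_apply, hiB]
    · rfl
  have on_B : B.card * a ≤ ∑ b ∈ B, tnormAux θ S m (tsProj (E' b) x) := by
    rw [← nsmul_eq_mul]
    refine Finset.card_nsmul_le_sum _ _ _ fun b hb =>
      le_trans ?_ (abs_apply_le_tnormAux m _ b)
    simpa [hE', hb, tsProj_apply, hx, flatVec_apply, hp b hb] using le_abs_self a
  calc θ * ∑ j ∈ J, tnormAux θ S m (tsProj (E j) p) + θ * (B.card * a)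
      ≤ θ * ∑ j ∈ J ∪ B, tnormAux θ S m (tsProj (E' j) x) := by
        rw [Finset.sum_union (Finset.disjoint_left.mpr fun _ => hJnB), mul_add]
        gcongr
    _ ≤ tnormAux θ S (m + 1) x := (hE.union_singletons hB).mul_sum_le_tnormAux_succ h0 h1 hJB m x
    _ ≤ tnorm θ S x := tnormAux_le_tnorm h0 h1 (m + 1) x

lemma tnorm_flatVec_eq_one (h0 : 0 ≤ θ) (h1 : θ ≤ 1) {a : ℝ} (ha0 : 0 ≤ a) (ha1 : a ≤ 1)
    (haB : θ * (B.card * a) = 1) (hB : B ∈ S) : tnorm θ S (flatVec a B) = 1 := by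
  refine le_antisymm (tnorm_flatVec_le h0 h1 ?_ ?_) ?_
  · rwa [abs_of_nonneg ha0]
  · rw [abs_of_nonneg ha0, haB]
  · have hempty : IsSuccessive ∅ fun _ => ∅ := ⟨by simp, by simp⟩
    simpa [haB] using hempty.le_tnorm_flatVec_sub h0 h1 (B := B) (by simp) (by simpa using hB)
      (p := 0) (by simp) 0 a

lemma exists_isSuccessive_lt_mul_sum {p : ℕ+ →₀ ℝ} {C : ℝ} (hp : ∀ i, |p i| ≤ C)
    (hC : C < tnorm θ S p) :
    ∃ m, ∃ J ∈ S, ∃ E, IsSuccessive J E ∧ C < θ * ∑ j ∈ J, tnormAux θ S m (tsProj (E j) p) := by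
  by_contra! hle
  refine hC.not_ge (ciSup_le fun m => ?_)
  induction m with
  | zero => exact Real.iSup_le hp ((abs_nonneg _).trans (hp 1))
  | succ m ih => exact tnormAux_succ_le ih (hle m)

lemma exists_heavy_subset_of_lt_half {n : ℕ} {j : ℕ+} {v : ℕ+ → ℝ} {η : ℝ} (hη : 3 * η ≤ 1 - 2 * θ)
    (hJ : J ∈ Schreier (n + 2)) (hj : IsLeast (J : Set ℕ+) j) (hB : B ∈ Schreier 1)
    (hJB : Precedes J B) (hvj : v j ≤ θ + η) (hv : 1 - η < ∑ i ∈ J, v i) :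
    ∃ K ⊆ J, K ∪ B ∈ Schreier (n + 2) ∧ θ + η < ∑ i ∈ K, v i := by
  refine ⟨J.erase j, Finset.erase_subset j J,
    erase_union_mem_schreier_add_two hJ hj (schreier_one_subset n hB) hJB, ?_⟩
  rw [Finset.sum_erase_eq_sub hj.1]
  linarith

lemma exists_heavy_subset_of_half {n : ℕ} {j : ℕ+} {v : ℕ+ → ℝ} {η : ℝ} (hη : η ≤ 1 / 16)
    (hJ : J ∈ Schreier (n + 2)) (hj : IsLeast (J : Set ℕ+) j) (hB : B.card ≤ 2)
    (hJB : Precedes J B) (hvj : v j ≤ 1 / 2 + η) (hv : 1 - η < ∑ i ∈ J, v i) :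
    ∃ K ⊆ J, K ∪ B ∈ Schreier (n + 2) ∧ 1 / 2 + η < ∑ i ∈ K, v i := by
  have hj2 : 2 ≤ (j : ℕ) := by
    by_contra! hlt
    obtain rfl : j = 1 := PNat.coe_eq_one_iff.mp (by have := j.pos; omega)
    obtain ⟨i, rfl⟩ := Finset.card_eq_one.mp
      ((card_le_one_of_one_mem_schreier hJ hj.1).antisymm (Finset.card_pos.mpr ⟨1, hj.1⟩))
    obtain rfl : 1 = i := Finset.mem_singleton.mp hj.1
    rw [Finset.sum_singleton] at hv
    linarith
  by_contra! hlight
  have hj_light := hlight (J.erase j) (Finset.erase_subset j J)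
    (erase_union_mem_schreier_add_two hJ hj
      (schreier_one_subset n (mem_schreier_one_of_precedes ⟨j, hj.1⟩ hJB hB)) hJB)
  rw [Finset.sum_erase_eq_sub hj.1] at hj_light
  rcases exists_room_or_splitting hJ hj hj2 hB hJB with hroom | ⟨L, b, hL⟩
  · have := hlight J subset_rfl hroom
    linarith
  have hb := hL.subset hL.mem
  have hLb : insert j (L.erase b) ⊆ J :=
    Finset.insert_subset hj.1 ((Finset.erase_subset b L).trans hL.subset)
  have sdiff_light := hlight (J \ L) Finset.sdiff_subset hL.sdiff_union_mem
  have pair_light := hlight {j, b} (Finset.insert_subset hj.1 (by simpa using hb))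
    hL.pair_union_mem
  have insert_light := hlight _ hLb hL.insert_erase_union_mem
  rw [Finset.sum_pair (ne_of_mem_of_not_mem hL.mem hL.notMem).symm] at pair_light
  rw [Finset.sum_insert fun h => hL.notMem (Finset.mem_of_mem_erase h),
    Finset.sum_erase_eq_sub hL.mem] at insert_light
  have hsplit := Finset.sum_sdiff (f := v) hL.subset
  linarith

lemma exists_forall_exists_heavy_subset (hθ : θ ≤ 1 / 2) :
    ∃ η₀ > 0, ∀ η ≤ η₀, ∀ {n : ℕ} {J B : Finset ℕ+} {j : ℕ+} {v : ℕ+ → ℝ},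
      J ∈ Schreier (n + 2) → IsLeast (J : Set ℕ+) j → B ∈ Schreier 1 → B.card = ⌈θ⁻¹⌉₊ →
      Precedes J B → v j ≤ θ + η → 1 - η < ∑ i ∈ J, v i →
      ∃ K ⊆ J, K ∪ B ∈ Schreier (n + 2) ∧ θ + η < ∑ i ∈ K, v i := by
  rcases hθ.lt_or_eq with hlt | rfl
  · exact ⟨(1 - 2 * θ) / 3, by linarith, fun η hη _ _ _ _ _ hJ hj hB _ =>
      exists_heavy_subset_of_lt_half (by linarith) hJ hj hB⟩
  · have hceil : ⌈(1 / 2 : ℝ)⁻¹⌉₊ = 2 := by norm_num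
    exact ⟨1 / 16, by norm_num, fun η hη _ _ _ _ _ hJ hj _ hB =>
      exists_heavy_subset_of_half hη hJ hj (hB.trans hceil).le⟩

lemma eventually_precedes_and_mem_schreier_one (T : Finset ℕ+) (N : ℕ) :
    ∀ᶠ t in Filter.atTop, ∀ B : Finset ℕ+, B.card = N → (∀ b ∈ B, t ≤ b) →
      Precedes T B ∧ B ∈ Schreier 1 := by
  filter_upwards [(Filter.eventually_all_finset T).mpr fun a _ => Filter.eventually_gt_atTop a,
    Filter.eventually_ge_atTop N.succPNat] with t hT hN B hB ht
  refine ⟨fun a ha b hb => (hT a ha).trans_le (ht b hb), fun b hb => ?_⟩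
  exact hB.trans_le ((Nat.le_succ N).trans (hN.trans (ht b hb)))

-- Of the norm of `flatVec a B - p`, the singletons in `B` contribute `1`, and a thinned-out family
-- of sets almost realizing the norm of `p` contributes more than `θ`.
lemma exists_forall_eventually_lt_tnorm_flatVec_sub (h0 : 0 < θ) (hθ : θ ≤ 1 / 2) :
    ∃ η₀ > 0, ∀ η > 0, η ≤ η₀ → ∀ {n : ℕ} {p : ℕ+ →₀ ℝ} {a : ℝ}, θ * (⌈θ⁻¹⌉₊ * a) = 1 →
      1 - η < tnorm θ (Schreier (n + 2)) p → tnorm θ (Schreier (n + 2)) p ≤ 1 + η →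
      (∀ i, |p i| ≤ 1 - η) → ∀ᶠ t in Filter.atTop, ∀ B : Finset ℕ+, B.card = ⌈θ⁻¹⌉₊ →
        (∀ b ∈ B, t ≤ b) → 1 + θ + η < tnorm θ (Schreier (n + 2)) (flatVec a B - p) := by
  obtain ⟨η₀, hη₀, heavy⟩ := exists_forall_exists_heavy_subset hθ
  refine ⟨η₀, hη₀, fun η hη hηη₀ n p a ha hp_gt hp_le hp_sup => ?_⟩
  have h1 : θ ≤ 1 := by linarith
  obtain ⟨m, J, hJ, E, hE, hsum⟩ := exists_isSuccessive_lt_mul_sum hp_sup hp_gt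
  set w : ℕ+ → ℝ := fun j => tnormAux θ (Schreier (n + 2)) m (tsProj (E j) p)
  have hw : ∀ j, θ * w j ≤ θ + η := fun j => by
    have hwj : w j ≤ 1 + η := (tnormAux_mono h0.le h1 m (abs_tsProj_apply_le (E j) p)).trans
      ((tnormAux_le_tnorm h0.le h1 m p).trans hp_le)
    nlinarith
  have hJne : J.Nonempty := by
    refine Finset.nonempty_of_ne_empty fun hJ0 => ?_
    rw [hJ0, Finset.sum_empty, mul_zero] at hsum
    exact hsum.not_ge ((abs_nonneg _).trans (hp_sup 1))
  filter_upwards [eventually_precedes_and_mem_schreier_one (J.biUnion E ∪ p.support) ⌈θ⁻¹⌉₊]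
    with t ht B hBcard htB
  obtain ⟨hTB, hB1⟩ := ht B hBcard htB
  have hEB : ∀ j ∈ J, Precedes (E j) B := fun j hj =>
    hTB.mono ((Finset.subset_biUnion_of_mem E hj).trans Finset.subset_union_left) subset_rfl
  have hJB : Precedes J B := fun j hj => hEB j hj j (hE.isLeast j hj).1
  have hpB : ∀ b ∈ B, p b = 0 := fun b hb => by
    by_contra hpb
    exact (hTB b (Finset.mem_union_right _ (Finsupp.mem_support_iff.mpr hpb)) b hb).false
  rw [Finset.mul_sum] at hsum
  obtain ⟨K, hKJ, hKB, hK⟩ := heavy η hηη₀ hJ (J.isLeast_min' hJne) hB1 hBcard hJB (hw _) hsum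
  have hfar := (hE.mono hKJ).le_tnorm_flatVec_sub h0.le h1 (fun j hj => hEB j (hKJ hj)) hKB hpB m a
  rw [hBcard, ha, Finset.mul_sum] at hfar
  linarith

end FlatVectors

/-! ### Isometries of the unit sphere -/

section SphereExtension

variable {X Y W : Type*} [NormedAddCommGroup X] [NormedSpace ℝ X] [NormedAddCommGroup Y]
  [NormedSpace ℝ Y] [AddCommGroup W] [Module ℝ W]

lemma exists_eq_smul_sphere {x : X} (hx : x ≠ 0) :
    ∃ u : Metric.sphere (0 : X) 1, x = ‖x‖ • (u : X) :=
  ⟨⟨NormedSpace.normalize x, mem_sphere_zero_iff_norm.mpr (NormedSpace.norm_normalize hx)⟩,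
    (NormedSpace.norm_smul_normalize x).symm⟩

lemma exists_linearIsometry_eq_on_sphere {U : Metric.sphere (0 : X) 1 → Metric.sphere (0 : Y) 1}
    {c : Y →ₗ[ℝ] W} (hc : Function.Injective c) (L : X →ₗ[ℝ] W) (hU : ∀ x, c (U x) = L x) :
    ∃ V : X →ₗᵢ[ℝ] Y, ∀ x : Metric.sphere (0 : X) 1, V x = U x := by
  have lift : ∀ x, ∃ y, ‖y‖ = ‖x‖ ∧ c y = L x := by
    intro x
    rcases eq_or_ne x 0 with rfl | hx
    · exact ⟨0, by simp⟩
    obtain ⟨u, hu⟩ := exists_eq_smul_sphere hx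
    refine ⟨‖x‖ • (U u : Y), by simp [norm_smul], ?_⟩
    rw [map_smul, hU, ← map_smul, ← hu]
  choose V hnorm hV using lift
  exact ⟨⟨⟨⟨V, fun x y => hc (by simp [hV])⟩, fun r x => hc (by simp [hV])⟩, hnorm⟩,
    fun x => hc ((hV x).trans (hU x).symm)⟩

lemma surjective_of_surjective_on_sphere
    {U : Metric.sphere (0 : X) 1 → Metric.sphere (0 : Y) 1} (hU : Function.Surjective U)
    {V : X →ₗ[ℝ] Y} (hV : ∀ x : Metric.sphere (0 : X) 1, V x = U x) : Function.Surjective V := by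
  intro y
  rcases eq_or_ne y 0 with rfl | hy
  · exact ⟨0, map_zero V⟩
  obtain ⟨u, hu⟩ := exists_eq_smul_sphere hy
  obtain ⟨x, rfl⟩ := hU u
  exact ⟨‖y‖ • (x : X), by rw [map_smul, hV, ← hu]⟩

end SphereExtension

section TingleyBasis

lemma eq_neg_of_two_le_abs_sub {t δ : ℝ} (hδ : |δ| = 1) (ht : |t| ≤ 1) (h : 2 ≤ |t - δ|) :
    t = -δ := by
  obtain ⟨ht₁, ht₂⟩ := abs_le.mp ht
  rcases eq_or_eq_neg_of_abs_eq hδ with rfl | rfl <;> rcases le_abs.mp h with h | h <;> linarith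

lemma abs_mul_sub_of_abs_eq_one {ε : ℝ} (hε : |ε| = 1) (t δ : ℝ) :
    |ε * t - δ| = |t - ε * δ| := by
  rcases eq_or_eq_neg_of_abs_eq hε with rfl | rfl
  · simp only [one_mul]
  · rw [← abs_neg]
    ring_nf

lemma mem_uIcc_zero_of_abs_sub_le_max {s t : ℝ} (hs : |s| ≤ 1)
    (h : ∀ δ : ℝ, |δ| = 1 → |t - δ| ≤ max |s - δ| 1) : t ∈ Set.uIcc s 0 := by
  obtain ⟨hs₁, hs₂⟩ := abs_le.mp hs
  have upper : t ≤ max s 0 := by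
    have := (le_abs_self _).trans (h (-1) (by simp))
    rw [abs_of_nonneg (by linarith), le_max_iff] at this
    exact le_max_iff.mpr (this.imp (fun h => by linarith) fun h => by linarith)
  have lower : min s 0 ≤ t := by
    have := (neg_le_abs _).trans (h 1 (by simp))
    rw [abs_of_nonpos (by linarith), le_max_iff] at this
    exact min_le_iff.mpr (this.imp (fun h => by linarith) fun h => by linarith)
  exact ⟨lower, upper⟩

variable {ι κ : Type*} [DecidableEq ι] [DecidableEq κ] {θ : ℝ} {X Y : Type*}
  [NormedAddCommGroup X] [NormedSpace ℝ X] [NormedAddCommGroup Y] [NormedSpace ℝ Y]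
  {e : ι → X} {c : X →ₗ[ℝ] ι → ℝ} {f : κ → Y} {d : Y →ₗ[ℝ] κ → ℝ}

/-- Vectors `e i` with coordinate functionals `c · i` having the properties of the unit vector
basis of Tsirelson space on which the solution of Tingley's problem rests. -/
structure IsTingleyBasis (θ : ℝ) (e : ι → X) (c : X →ₗ[ℝ] ι → ℝ) : Prop where
  nonneg : 0 ≤ θ
  le_half : θ ≤ 1 / 2
  abs_coord_le : ∀ x i, |c x i| ≤ ‖x‖
  coord_injective : Function.Injective c
  coord_basis : ∀ i, c (e i) = Pi.single i 1
  norm_smul_add_le : ∀ i (a : ℝ) x, ‖a • e i + x‖ ≤ max |a + c x i| (θ * |a| + ‖x‖)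
  norm_sub_coord_smul_le : ∀ x i, ‖x - c x i • e i‖ ≤ ‖x‖
  exists_far : ∀ p q, ‖p‖ = 1 → ‖q‖ = 1 → (∀ i, |c p i| < 1) → (∀ i, |c q i| < 1) →
    ∃ x, ‖x‖ = 1 ∧ 1 + θ < ‖x - p‖ ∧ 1 + θ < ‖x - q‖

namespace IsTingleyBasis

open Metric (sphere)

lemma norm_basis (h : IsTingleyBasis θ e c) (i : ι) : ‖e i‖ = 1 := by
  refine le_antisymm ?_ (by simpa [h.coord_basis] using h.abs_coord_le (e i) i)
  simpa using (h.norm_smul_add_le i 1 0).trans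
    (max_le (by simp) (by simpa using h.le_half.trans (by norm_num)))

lemma abs_coord_le_one (h : IsTingleyBasis θ e c) (x : sphere (0 : X) 1) (i : ι) :
    |c x i| ≤ 1 :=
  (h.abs_coord_le x i).trans_eq (norm_eq_of_mem_sphere x)

lemma abs_coord_sub_le_dist (h : IsTingleyBasis θ e c) (x y : sphere (0 : X) 1) (i : ι) :
    |c x i - c y i| ≤ dist x y := by
  simpa [Subtype.dist_eq, dist_eq_norm] using h.abs_coord_le (x - y) i

/-- The point `δ e_i` of the unit sphere, where `δ` is a sign. -/
def signedBasis (h : IsTingleyBasis θ e c) (i : ι) {δ : ℝ} (hδ : |δ| = 1) : sphere (0 : X) 1 :=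
  ⟨δ • e i, by simp [norm_smul, h.norm_basis, hδ]⟩

lemma coord_signedBasis (h : IsTingleyBasis θ e c) (i : ι) {δ : ℝ} (hδ : |δ| = 1) :
    c (h.signedBasis i hδ) = Pi.single i δ := by
  simp [signedBasis, h.coord_basis, ← Pi.single_smul']

lemma dist_signedBasis_le (h : IsTingleyBasis θ e c) (i : ι) {δ : ℝ} (hδ : |δ| = 1)
    (x : sphere (0 : X) 1) : dist x (h.signedBasis i hδ) ≤ max |c x i - δ| (1 + θ) := by
  have := h.norm_smul_add_le i (-δ) x
  rwa [abs_neg, hδ, norm_eq_of_mem_sphere, mul_one, neg_smul, neg_add_eq_sub, neg_add_eq_sub,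
    add_comm θ, ← dist_eq_norm] at this

lemma dist_signedBasis_le_or_dist_signedBasis_neg_le (h : IsTingleyBasis θ e c) (i : ι) {δ : ℝ}
    (hδ : |δ| = 1) (hδ' : |-δ| = 1) (x : sphere (0 : X) 1) :
    dist x (h.signedBasis i hδ) ≤ 1 + θ ∨ dist x (h.signedBasis i hδ') ≤ 1 + θ := by
  have hθ := h.nonneg
  obtain ⟨hx₁, hx₂⟩ := abs_le.mp (h.abs_coord_le_one x i)
  have near : |c x i - δ| ≤ 1 + θ ∨ |c x i - -δ| ≤ 1 + θ := by
    simp only [abs_le]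
    rcases eq_or_eq_neg_of_abs_eq hδ with rfl | rfl <;> rcases le_total 0 (c x i) with h0 | h0
    exacts [.inl ⟨by linarith, by linarith⟩, .inr ⟨by linarith, by linarith⟩,
      .inr ⟨by linarith, by linarith⟩, .inl ⟨by linarith, by linarith⟩]
  exact near.imp (fun hx => (h.dist_signedBasis_le i hδ x).trans (max_le hx le_rfl))
    fun hx => (h.dist_signedBasis_le i hδ' x).trans (max_le hx le_rfl)

lemma two_le_dist (h : IsTingleyBasis θ e c) {i : ι} {δ : ℝ} (hδ : |δ| = 1)
    {x y : sphere (0 : X) 1} (hx : c x i = -δ) (hy : c y i = δ) : 2 ≤ dist x y := by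
  refine le_trans ?_ (h.abs_coord_sub_le_dist x y i)
  rw [hx, hy, ← neg_add', abs_neg, ← two_mul, abs_mul, hδ]
  norm_num

lemma two_le_dist_signedBasis_iff (h : IsTingleyBasis θ e c) {i : ι} {δ : ℝ} (hδ : |δ| = 1)
    {x : sphere (0 : X) 1} : 2 ≤ dist x (h.signedBasis i hδ) ↔ c x i = -δ := by
  refine ⟨fun hx => ?_, fun hx => h.two_le_dist hδ hx (by simp [h.coord_signedBasis])⟩
  refine eq_neg_of_two_le_abs_sub hδ (h.abs_coord_le_one x i) ?_
  refine (le_max_iff.mp (hx.trans (h.dist_signedBasis_le i hδ x))).resolve_right ?_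
  linarith [h.le_half]

lemma coord_eq_neg_iff_forall_two_le_dist (h : IsTingleyBasis θ e c) {i : ι} {δ : ℝ}
    (hδ : |δ| = 1) {x : sphere (0 : X) 1} :
    c x i = -δ ↔ ∀ y : sphere (0 : X) 1, c y i = δ → 2 ≤ dist x y :=
  ⟨fun hx _ hy => h.two_le_dist hδ hx hy, fun hx =>
    (h.two_le_dist_signedBasis_iff hδ).mp (hx _ (by simp [h.coord_signedBasis]))⟩

lemma coord_map_eq_of_coord_eq (h : IsTingleyBasis θ e c) (h' : IsTingleyBasis θ f d)
    (U : sphere (0 : X) 1 ≃ᵢ sphere (0 : Y) 1) {i : ι} {j : κ} {δ ε : ℝ} (hδ : |δ| = 1)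
    (hε : |ε| = 1) (hU : d (U (h.signedBasis i hδ)) j = ε) {x : sphere (0 : X) 1}
    (hx : c x i = δ) : d (U x) j = ε := by
  have hε' : |-ε| = 1 := by rwa [abs_neg]
  obtain ⟨y, hy⟩ := U.surjective (h'.signedBasis j hε')
  have hyi : c y i = -δ := by
    rw [← h.two_le_dist_signedBasis_iff hδ, ← U.dist_eq, hy]
    exact h'.two_le_dist hε (by simp [h'.coord_signedBasis]) hU
  rw [← neg_neg ε, ← h'.two_le_dist_signedBasis_iff hε', ← hy, U.dist_eq, dist_comm]
  exact h.two_le_dist hδ hyi hx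

lemma abs_coord_map_eq_one_of_neg (h : IsTingleyBasis θ e c) (h' : IsTingleyBasis θ f d)
    (U : sphere (0 : X) 1 ≃ᵢ sphere (0 : Y) 1) {i : ι} {j : κ} {δ : ℝ} (hδ : |δ| = 1)
    (hδ' : |-δ| = 1) (hj : |d (U (h.signedBasis i hδ')) j| = 1) :
    |d (U (h.signedBasis i hδ)) j| = 1 := by
  set p := U (h.signedBasis i hδ)
  have antipode : c (U.symm (-p)) i = -δ := by
    rw [← h.two_le_dist_signedBasis_iff hδ, ← U.dist_eq, U.apply_symm_apply, Subtype.dist_eq,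
      coe_neg_sphere, dist_eq_norm, ← neg_add', norm_neg, ← two_smul ℝ, norm_smul,
      norm_eq_of_mem_sphere]
    norm_num
  have hp := h.coord_map_eq_of_coord_eq h' U hδ' hj rfl antipode
  rw [U.apply_symm_apply, coe_neg_sphere, map_neg, Pi.neg_apply] at hp
  rw [← abs_neg, hp, hj]

lemma exists_abs_coord_map_eq_one (h : IsTingleyBasis θ e c) (h' : IsTingleyBasis θ f d)
    (U : sphere (0 : X) 1 ≃ᵢ sphere (0 : Y) 1) (i : ι) {δ : ℝ} (hδ : |δ| = 1) :
    ∃ j, |d (U (h.signedBasis i hδ)) j| = 1 := by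
  have hδ' : |-δ| = 1 := by rwa [abs_neg]
  set p := U (h.signedBasis i hδ)
  set q := U (h.signedBasis i hδ')
  by_contra! hpj
  have hqj : ∀ j, |d q j| ≠ 1 := fun j hj => hpj j (h.abs_coord_map_eq_one_of_neg h' U hδ hδ' hj)
  obtain ⟨y, hy, hyp, hyq⟩ := h'.exists_far p q (norm_eq_of_mem_sphere p) (norm_eq_of_mem_sphere q)
    (fun j => (h'.abs_coord_le_one p j).lt_of_ne (hpj j))
    fun j => (h'.abs_coord_le_one q j).lt_of_ne (hqj j)
  obtain ⟨x, hx⟩ := U.surjective ⟨y, mem_sphere_zero_iff_norm.mpr hy⟩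
  have dist_eq : ∀ z, dist x z = ‖y - U z‖ := fun z => by
    rw [← U.dist_eq, hx, Subtype.dist_eq, dist_eq_norm]
  rcases h.dist_signedBasis_le_or_dist_signedBasis_neg_le i hδ hδ' x with hle | hle
  · exact hle.not_gt (by rwa [dist_eq])
  · exact hle.not_gt (by rwa [dist_eq])

lemma exists_coord_eq_one_iff (h : IsTingleyBasis θ e c) (h' : IsTingleyBasis θ f d)
    (U : sphere (0 : X) 1 ≃ᵢ sphere (0 : Y) 1) (i : ι) :
    ∃ j, ∃ ε : ℝ, |ε| = 1 ∧ ∀ x : sphere (0 : X) 1, c x i = 1 ↔ d (U x) j = ε := by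
  obtain ⟨j, hj⟩ := h.exists_abs_coord_map_eq_one h' U i abs_one
  obtain ⟨l, hl⟩ := h'.exists_abs_coord_map_eq_one h U.symm j hj
  refine ⟨j, _, hj, fun x => ⟨h.coord_map_eq_of_coord_eq h' U abs_one hj rfl, fun hx => ?_⟩⟩
  have back : ∀ y : sphere (0 : Y) 1, d y j = d (U (h.signedBasis i abs_one)) j →
      c (U.symm y) l = c (U.symm (h'.signedBasis j hj)) l := fun y =>
    h'.coord_map_eq_of_coord_eq h U.symm hj hl rfl
  have hback := back _ rfl
  rw [U.symm_apply_apply, h.coord_signedBasis] at hback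
  obtain rfl : i = l := by
    by_contra hil
    rw [← hback, Pi.single_eq_of_ne' hil] at hl
    simp at hl
  simpa [← hback] using back (U x) hx

lemma exists_coord_eq_sign_iff (h : IsTingleyBasis θ e c) (h' : IsTingleyBasis θ f d)
    (U : sphere (0 : X) 1 ≃ᵢ sphere (0 : Y) 1) (i : ι) :
    ∃ j, ∃ ε : ℝ, |ε| = 1 ∧ ∀ (x : sphere (0 : X) 1) (δ : ℝ), |δ| = 1 →
      (c x i = δ ↔ d (U x) j = ε * δ) := by
  obtain ⟨j, ε, hε, hone⟩ := h.exists_coord_eq_one_iff h' U i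
  refine ⟨j, ε, hε, fun x δ hδ => ?_⟩
  rcases eq_or_eq_neg_of_abs_eq hδ with rfl | rfl
  · rw [hone, mul_one]
  · rw [mul_neg_one, h.coord_eq_neg_iff_forall_two_le_dist abs_one,
      h'.coord_eq_neg_iff_forall_two_le_dist hε, U.surjective.forall]
    simp_rw [hone, U.dist_eq]

lemma exists_coord_eq_dist_le (h : IsTingleyBasis θ e c) (x : sphere (0 : X) 1) (i : ι) {δ : ℝ}
    (hδ : |δ| = 1) :
    ∃ y : sphere (0 : X) 1, c y i = δ ∧ dist x y ≤ max |c x i - δ| 1 := by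
  have hθ := h.nonneg
  have hθ' : 0 ≤ 1 - θ := by linarith [h.le_half]
  set z : X := x - c x i • e i with hz
  have hz_norm : ‖z‖ ≤ 1 := (h.norm_sub_coord_smul_le x i).trans_eq (norm_eq_of_mem_sphere x)
  have hz_coord : c z i = 0 := by simp [hz, h.coord_basis]
  set y : X := δ • e i + (1 - θ) • z with hy
  have hy_coord : c y i = δ := by simp [hy, h.coord_basis, hz_coord]
  have hy_norm : ‖y‖ = 1 := by
    refine le_antisymm ((h.norm_smul_add_le i δ _).trans (max_le ?_ ?_)) ?_
    · simp [hz_coord, hδ]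
    · rw [hδ, norm_smul, Real.norm_of_nonneg hθ']
      nlinarith
    · simpa [hy_coord, hδ] using h.abs_coord_le y i
  refine ⟨⟨y, mem_sphere_zero_iff_norm.mpr hy_norm⟩, hy_coord, ?_⟩
  have hxy : (x : X) - y = (c x i - δ) • e i + θ • z := by
    rw [hy, hz]
    module
  rw [Subtype.dist_eq, dist_eq_norm, hxy]
  refine (h.norm_smul_add_le i _ _).trans (max_le (by simp [hz_coord]) ?_)
  have hmax : |c x i - δ| + 1 ≤ 2 * max |c x i - δ| 1 := by
    linarith [le_max_left |c x i - δ| 1, le_max_right |c x i - δ| 1]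
  calc θ * |c x i - δ| + ‖θ • z‖ ≤ θ * (|c x i - δ| + 1) := by
        rw [norm_smul, Real.norm_of_nonneg hθ, ← mul_add]
        gcongr
    _ ≤ 1 / 2 * (2 * max |c x i - δ| 1) := by
        gcongr
        exact h.le_half
    _ = max |c x i - δ| 1 := by ring

lemma abs_coord_map_sub_le (h : IsTingleyBasis θ e c) (h' : IsTingleyBasis θ f d)
    {U : sphere (0 : X) 1 → sphere (0 : Y) 1} (hU : Isometry U) {i : ι} {j : κ} {δ δ' : ℝ}
    (hδ : |δ| = 1) (hface : ∀ y : sphere (0 : X) 1, c y i = δ → d (U y) j = δ')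
    (x : sphere (0 : X) 1) :
    |d (U x) j - δ'| ≤ max |c x i - δ| 1 := by
  obtain ⟨y, hy, hxy⟩ := h.exists_coord_eq_dist_le x i hδ
  calc |d (U x) j - δ'| = |d (U x) j - d (U y) j| := by rw [hface y hy]
    _ ≤ dist (U x) (U y) := h'.abs_coord_sub_le_dist _ _ j
    _ = dist x y := hU.dist_eq x y
    _ ≤ max |c x i - δ| 1 := hxy

lemma exists_coord_eq_sign_mul_coord_map (h : IsTingleyBasis θ e c) (h' : IsTingleyBasis θ f d)
    (U : sphere (0 : X) 1 ≃ᵢ sphere (0 : Y) 1) (i : ι) :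
    ∃ j, ∃ ε : ℝ, ∀ x : sphere (0 : X) 1, c x i = ε * d (U x) j := by
  obtain ⟨j, ε, hε, hface⟩ := h.exists_coord_eq_sign_iff h' U i
  refine ⟨j, ε, fun x => ?_⟩
  have hUx : |ε * d (U x) j| ≤ 1 := by
    rw [abs_mul, hε, one_mul]
    exact h'.abs_coord_le_one (U x) j
  refine Set.eq_of_mem_uIcc_of_mem_uIcc (mem_uIcc_zero_of_abs_sub_le_max hUx fun δ hδ => ?_)
    (mem_uIcc_zero_of_abs_sub_le_max (h.abs_coord_le_one x i) fun δ hδ => ?_)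
  · have hεδ : |ε * δ| = 1 := by rw [abs_mul, hε, hδ, one_mul]
    rw [abs_mul_sub_of_abs_eq_one hε]
    simpa using h'.abs_coord_map_sub_le h U.symm.isometry hεδ
      (fun y hy => (hface (U.symm y) δ hδ).mpr (by simpa using hy)) (U x)
  · rw [abs_mul_sub_of_abs_eq_one hε]
    exact h.abs_coord_map_sub_le h' U.isometry hδ (fun y => (hface y δ hδ).mp) x

theorem exists_linearIsometry (h : IsTingleyBasis θ e c) (h' : IsTingleyBasis θ f d)
    {U : sphere (0 : X) 1 → sphere (0 : Y) 1} (hU : Isometry U) (hsurj : Function.Surjective U) :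
    ∃ V : X →ₗᵢ[ℝ] Y, Function.Surjective V ∧ ∀ x : sphere (0 : X) 1, V x = U x := by
  let U' : sphere (0 : X) 1 ≃ᵢ sphere (0 : Y) 1 :=
    ⟨Equiv.ofBijective U ⟨hU.injective, hsurj⟩, hU⟩
  choose σ ε hσ using h'.exists_coord_eq_sign_mul_coord_map h U'.symm
  let L : X →ₗ[ℝ] κ → ℝ := LinearMap.pi fun j => ε j • LinearMap.proj (σ j) ∘ₗ c
  obtain ⟨V, hV⟩ := exists_linearIsometry_eq_on_sphere h'.coord_injective L (U := U)
    fun x => funext fun j => (hσ j (U' x)).trans (by rw [U'.symm_apply_apply]; rfl)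
  exact ⟨V, surjective_of_surjective_on_sphere (V := V.toLinearMap) hsurj hV, hV⟩

end IsTingleyBasis

end TingleyBasis

/-! ### Coordinates in Tsirelson space -/

section Coordinates

variable {θ : ℝ} {S : Set (Finset ℕ+)} {X : Type*} [NormedAddCommGroup X] [NormedSpace ℝ X]
  {e : ℕ+ → X}

/-- The unit vectors `e` of Tsirelson space in a space which need not be complete: `e` is an
unconditional basis whose finite linear combinations have the Tsirelson norm of their
coefficients. -/
structure IsTsirelsonBasis (θ : ℝ) (S : Set (Finset ℕ+)) (e : ℕ+ → X) : Prop where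
  norm_linearCombination : ∀ a : ℕ+ →₀ ℝ, ‖Finsupp.linearCombination ℝ e a‖ = tnorm θ S a
  expansion : ∀ x : X, ∃! a : ℕ+ → ℝ, HasSum (fun i => a i • e i) x

lemma IsTsirelsonSpace.isTsirelsonBasis {n : ℕ} (h : IsTsirelsonSpace θ n X e) :
    IsTsirelsonBasis θ (Schreier n) e :=
  ⟨h.norm_embed, h.expansion⟩

namespace IsTsirelsonBasis

/-- The coordinates of a vector with respect to the unit vector basis of Tsirelson space. -/
def coord (h : IsTsirelsonBasis θ S e) : X →ₗ[ℝ] ℕ+ → ℝ where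
  toFun x := (h.expansion x).choose
  map_add' x y := by
    refine (h.expansion (x + y)).unique (h.expansion (x + y)).choose_spec.1 ?_
    simpa only [Pi.add_apply, add_smul] using
      (h.expansion x).choose_spec.1.add (h.expansion y).choose_spec.1
  map_smul' r x := by
    refine (h.expansion (r • x)).unique (h.expansion (r • x)).choose_spec.1 ?_
    simpa only [Pi.smul_apply, smul_assoc, RingHom.id_apply] using
      (h.expansion x).choose_spec.1.const_smul r

lemma hasSum_coord (h : IsTsirelsonBasis θ S e) (x : X) :
    HasSum (fun i => h.coord x i • e i) x :=
  (h.expansion x).choose_spec.1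

lemma coord_injective (h : IsTsirelsonBasis θ S e) : Function.Injective h.coord := by
  intro x y hxy
  refine (h.hasSum_coord x).unique ?_
  rw [hxy]
  exact h.hasSum_coord y

lemma coord_linearCombination (h : IsTsirelsonBasis θ S e) (a : ℕ+ →₀ ℝ) :
    h.coord (Finsupp.linearCombination ℝ e a) = a := by
  refine (h.expansion _).unique (h.hasSum_coord _) ?_
  rw [Finsupp.linearCombination_apply]
  exact hasSum_sum_of_ne_finset_zero fun i hi => by rw [Finsupp.notMem_support_iff.mp hi, zero_smul]

lemma coord_basis (h : IsTsirelsonBasis θ S e) (i : ℕ+) : h.coord (e i) = Pi.single i 1 := by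
  simpa [Finsupp.single_eq_pi_single] using h.coord_linearCombination (Finsupp.single i 1)

/-- The truncation to `F` of the coordinates of `x`. -/
def truncation (h : IsTsirelsonBasis θ S e) (x : X) (F : Finset ℕ+) : ℕ+ →₀ ℝ :=
  Finsupp.indicator F fun i _ => h.coord x i

lemma tendsto_linearCombination_truncation (h : IsTsirelsonBasis θ S e) (x : X) :
    Filter.Tendsto (fun F => Finsupp.linearCombination ℝ e (h.truncation x F)) Filter.atTop
      (nhds x) := by
  refine (h.hasSum_coord x).congr fun F => ?_
  rw [Finsupp.linearCombination_apply, truncation, Finsupp.sum_indicator_index _ (by simp)]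

lemma denseRange_linearCombination (h : IsTsirelsonBasis θ S e) :
    DenseRange (Finsupp.linearCombination ℝ e) := fun x =>
  mem_closure_of_tendsto (h.tendsto_linearCombination_truncation x)
    (Filter.Eventually.of_forall fun _ => Set.mem_range_self _)

lemma abs_coord_le (h : IsTsirelsonBasis θ S e) (h0 : 0 ≤ θ) (h1 : θ ≤ 1) (x : X) (i : ℕ+) :
    |h.coord x i| ≤ ‖x‖ := by
  refine ge_of_tendsto (h.tendsto_linearCombination_truncation x).norm ?_
  filter_upwards [Filter.eventually_ge_atTop {i}] with F hF
  rw [h.norm_linearCombination]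
  simpa [truncation, Finsupp.indicator_apply, Finset.singleton_subset_iff.mp hF] using
    abs_apply_le_tnorm h0 h1 (h.truncation x F) i

lemma continuous_coord (h : IsTsirelsonBasis θ S e) (h0 : 0 ≤ θ) (h1 : θ ≤ 1) (i : ℕ+) :
    Continuous fun x => h.coord x i :=
  AddMonoidHomClass.continuous_of_bound (LinearMap.proj i ∘ₗ h.coord) 1 fun x => by
    simpa using h.abs_coord_le h0 h1 x i

lemma norm_smul_add_le (h : IsTsirelsonBasis θ S e) (h0 : 0 ≤ θ) (h1 : θ ≤ 1) (i : ℕ+) (a : ℝ)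
    (x : X) : ‖a • e i + x‖ ≤ max |a + h.coord x i| (θ * |a| + ‖x‖) := by
  have hcont := h.continuous_coord h0 h1 i
  refine h.denseRange_linearCombination.induction_on x (isClosed_le (by fun_prop) (by fun_prop))
    fun v => ?_
  have hsum : a • e i + Finsupp.linearCombination ℝ e v =
      Finsupp.linearCombination ℝ e (Finsupp.single i a + v) := by simp
  rw [hsum, h.norm_linearCombination, h.norm_linearCombination, h.coord_linearCombination]
  refine tnorm_add_le h0 h1 (fun j => ?_) (le_max_of_le_right ?_)
  · rcases eq_or_ne j i with rfl | hj
    · simp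
    · simp only [Finsupp.single_eq_of_ne hj, zero_add]
      have := abs_apply_le_tnorm (S := S) h0 h1 v j
      exact le_max_of_le_right (by nlinarith [abs_nonneg a])
  · simp [l1Norm]

lemma norm_sub_coord_smul_le (h : IsTsirelsonBasis θ S e) (h0 : 0 ≤ θ) (h1 : θ ≤ 1) (x : X)
    (i : ℕ+) : ‖x - h.coord x i • e i‖ ≤ ‖x‖ := by
  have hcont := h.continuous_coord h0 h1 i
  refine h.denseRange_linearCombination.induction_on x (isClosed_le (by fun_prop) (by fun_prop))
    fun v => ?_
  have herase : Finsupp.linearCombination ℝ e v -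
      h.coord (Finsupp.linearCombination ℝ e v) i • e i =
        Finsupp.linearCombination ℝ e (v.erase i) := by
    simp [h.coord_linearCombination, Finsupp.erase_eq_sub_single]
  rw [herase, h.norm_linearCombination, h.norm_linearCombination]
  refine tnorm_mono h0 h1 fun j => ?_
  rcases eq_or_ne j i with rfl | hj
  · simp
  · rw [Finsupp.erase_ne hj]

lemma exists_pos_abs_coord_le_sub (h : IsTsirelsonBasis θ S e) (h0 : 0 ≤ θ) (h1 : θ ≤ 1) {x : X}
    (hx : ∀ i, |h.coord x i| < 1) : ∃ δ > 0, ∀ i, |h.coord x i| ≤ 1 - δ := by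
  have hzero : Filter.Tendsto (fun i => |h.coord x i|) Filter.cofinite (nhds 0) := by
    refine squeeze_zero (fun i => abs_nonneg _) (fun i => ?_)
      (tendsto_zero_iff_norm_tendsto_zero.mp (h.hasSum_coord x).summable.tendsto_cofinite_zero)
    simpa [h.coord_basis] using h.abs_coord_le h0 h1 (h.coord x i • e i) i
  have hlight : ∀ᶠ j in Filter.cofinite, max |h.coord x j| (1 / 2) ≤ max |h.coord x 1| (1 / 2) := by
    filter_upwards [hzero.eventually_le_const (u := 1 / 2) (by norm_num)] with j hj
    exact le_max_of_le_right (max_le hj le_rfl)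
  obtain ⟨i, hi⟩ : ∃ i, ∀ j, max |h.coord x j| (1 / 2) ≤ max |h.coord x i| (1 / 2) :=
    continuous_of_discreteTopology.exists_forall_ge' 1 (by rwa [Filter.cocompact_eq_cofinite])
  have hi1 : max |h.coord x i| (1 / 2) < 1 := max_lt (hx i) (by norm_num)
  exact ⟨1 - max |h.coord x i| (1 / 2), by linarith, fun j => by
    linarith [le_max_left |h.coord x j| (1 / 2), hi j]⟩

lemma eventually_lt_norm_linearCombination_flatVec_sub {n : ℕ}
    (h : IsTsirelsonBasis θ (Schreier (n + 2)) e) (h0 : 0 < θ) (hθ : θ ≤ 1 / 2) {a : ℝ}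
    (ha : θ * (⌈θ⁻¹⌉₊ * a) = 1) {p : X} (hp : ‖p‖ = 1) (hp_coord : ∀ i, |h.coord p i| < 1) :
    ∀ᶠ t in Filter.atTop, ∀ B : Finset ℕ+, B.card = ⌈θ⁻¹⌉₊ → (∀ b ∈ B, t ≤ b) →
      1 + θ < ‖Finsupp.linearCombination ℝ e (flatVec a B) - p‖ := by
  have h1 : θ ≤ 1 := by linarith
  obtain ⟨η₀, hη₀, far⟩ := exists_forall_eventually_lt_tnorm_flatVec_sub h0 hθ
  obtain ⟨δ, hδ, hpδ⟩ := h.exists_pos_abs_coord_le_sub h0.le h1 hp_coord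
  obtain ⟨η, hη, hηle⟩ : ∃ η > 0, η ≤ min η₀ (δ / 2) := ⟨_, by positivity, le_rfl⟩
  obtain ⟨hηη₀, hηδ⟩ := le_min_iff.mp hηle
  obtain ⟨v, hv⟩ := h.denseRange_linearCombination.exists_dist_lt p hη
  rw [dist_eq_norm] at hv
  have hv_norm : |1 - tnorm θ (Schreier (n + 2)) v| < η := by
    rw [← hp, ← h.norm_linearCombination]
    exact (abs_norm_sub_norm_le _ _).trans_lt hv
  obtain ⟨hv_gt, hv_lt⟩ := abs_lt.mp hv_norm
  have hv_coord : ∀ i, |v i| ≤ 1 - η := fun i => by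
    have hpv := (h.abs_coord_le h0.le h1 (p - Finsupp.linearCombination ℝ e v) i).trans hv.le
    rw [map_sub, h.coord_linearCombination, Pi.sub_apply, abs_sub_comm] at hpv
    linarith [abs_sub_abs_le_abs_sub (v i) (h.coord p i), hpδ i]
  filter_upwards [far η hη hηη₀ ha (by linarith) (by linarith) hv_coord] with t ht B hBcard htB
  have hB := ht B hBcard htB
  rw [← h.norm_linearCombination, map_sub] at hB
  linarith [norm_sub_le_norm_sub_add_norm_sub (Finsupp.linearCombination ℝ e (flatVec a B)) p
    (Finsupp.linearCombination ℝ e v)]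

lemma exists_far {n : ℕ} (h : IsTsirelsonBasis θ (Schreier (n + 2)) e) (h0 : 0 < θ)
    (hθ : θ ≤ 1 / 2) {p q : X} (hp : ‖p‖ = 1) (hq : ‖q‖ = 1) (hp_coord : ∀ i, |h.coord p i| < 1)
    (hq_coord : ∀ i, |h.coord q i| < 1) :
    ∃ x, ‖x‖ = 1 ∧ 1 + θ < ‖x - p‖ ∧ 1 + θ < ‖x - q‖ := by
  have hceil : 1 ≤ θ * ⌈θ⁻¹⌉₊ := by
    have := Nat.le_ceil θ⁻¹
    rwa [inv_le_iff_one_le_mul₀' h0] at this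
  set a := (θ * ⌈θ⁻¹⌉₊)⁻¹
  have ha1 : θ * (⌈θ⁻¹⌉₊ * a) = 1 := by
    rw [← mul_assoc]
    exact mul_inv_cancel₀ (by positivity)
  obtain ⟨t, ht, htp, htq⟩ := ((eventually_precedes_and_mem_schreier_one ∅ ⌈θ⁻¹⌉₊).and
    ((h.eventually_lt_norm_linearCombination_flatVec_sub h0 hθ ha1 hp hp_coord).and
      (h.eventually_lt_norm_linearCombination_flatVec_sub h0 hθ ha1 hq hq_coord))).exists
  obtain ⟨B, htB, hB⟩ := (Set.Ici_infinite t).exists_subset_card_eq ⌈θ⁻¹⌉₊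
  refine ⟨Finsupp.linearCombination ℝ e (flatVec a B), ?_, htp B hB htB, htq B hB htB⟩
  rw [h.norm_linearCombination]
  refine tnorm_flatVec_eq_one h0.le (by linarith) (by positivity) (inv_le_one_of_one_le₀ hceil)
    (by rwa [hB]) (schreier_one_subset _ (ht B hB htB).2)

lemma isTingleyBasis {n : ℕ} (h : IsTsirelsonBasis θ (Schreier n) e) (h0 : 0 < θ)
    (hθ : θ ≤ 1 / 2) (hn : 2 ≤ n) : IsTingleyBasis θ e h.coord := by
  obtain ⟨n, rfl⟩ := Nat.exists_eq_add_of_le' hn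
  have h1 : θ ≤ 1 := by linarith
  exact ⟨h0.le, hθ, h.abs_coord_le h0.le h1, h.coord_injective, h.coord_basis,
    h.norm_smul_add_le h0.le h1, h.norm_sub_coord_smul_le h0.le h1,
    fun p q => h.exists_far h0 hθ⟩

end IsTsirelsonBasis

end Coordinates

theorem tsirelson_tingley_Sn_general {θ : ℝ} (hθ0 : 0 < θ) (hθ : θ ≤ 1 / 2) {n m : ℕ} (hn : 2 ≤ n)
    (hm : 2 ≤ m) {X Y : Type*} [NormedAddCommGroup X] [NormedSpace ℝ X] [NormedAddCommGroup Y]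
    [NormedSpace ℝ Y] {e : ℕ+ → X} {f : ℕ+ → Y} (hX : IsTsirelsonBasis θ (Schreier n) e)
    (hY : IsTsirelsonBasis θ (Schreier m) f)
    {U : Metric.sphere (0 : X) 1 → Metric.sphere (0 : Y) 1} (hU : Isometry U)
    (hUsurj : Function.Surjective U) :
    ∃ V : X →ₗᵢ[ℝ] Y, Function.Surjective V ∧ ∀ x : Metric.sphere (0 : X) 1, V x = U x :=
  (hX.isTingleyBasis hθ0 hθ hn).exists_linearIsometry (hY.isTingleyBasis hθ0 hθ hm) hU hUsurj

/-- Tingley's problem for `T[θ, S_n]`, integer `θ⁻¹ ≥ 2`, `n ≥ 2`.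
Every surjective isometry of the unit sphere of `T[θ, S_n]` extends to a surjective
linear isometry of the whole space. -/
theorem tsirelson_tingley_Sn
    (θ : ℝ) (hθ0 : 0 < θ) (k : ℕ) (hk : 2 ≤ k) (hθk : θ⁻¹ = (k : ℝ))
    (n : ℕ) (hn : 2 ≤ n)
    (X : Type*) [NormedAddCommGroup X] [NormedSpace ℝ X] (e : ℕ+ → X)
    (hX : IsTsirelsonSpace θ n X e)
    (U : Metric.sphere (0 : X) 1 → Metric.sphere (0 : X) 1)
    (hU : Isometry U) (hUsurj : Function.Surjective U) :
    ∃ V : X →ₗᵢ[ℝ] X, Function.Surjective V ∧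
      ∀ x : Metric.sphere (0 : X) 1, V (x : X) = (U x : X) := by
  have hθ : θ ≤ 1 / 2 := by
    rw [one_div, le_inv_comm₀ hθ0 two_pos, hθk]
    exact_mod_cast hk
  exact tsirelson_tingley_Sn_general hθ0 hθ hn hn hX.isTsirelsonBasis hX.isTsirelsonBasis hU hUsurj
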